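/- Let β be an irrational real number, μ a nonzero real number, and E ∈ ℝ. Consider the almost Mathieu transfer matrix B^E(z) = [[E − 2μ·cos(2πz), −1], [1, 0]]. Then there exists ε′ > 0 such that for every real ε with |ε| > ε′, the complexified Lyapunov exponent satisfies L(β, B^E_ε) = log|μ| + 2π|ε|. -/

import Mathlib

open MeasureTheory Filter Complex
open scoped ENNReal Real NNReal

noncomputable section

attribute [local instance] Matrix.frobeniusNormedAddCommGroup

/-- The `n`-step cocycle iterate `D^{(n)}_β(x) = D(x+(n-1)β)⋯D(x)`. -/
def cocycleIter (D : ℝ → Matrix (Fin 2) (Fin 2) ℂ) (β : ℝ) : ℕ → ℝ → Matrix (Fin 2) (Fin 2) ℂ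
  | 0, _ => 1
  | n + 1, x => cocycleIter D β n (x + β) * D x

/-- The extended-real-valued integral `∫₀¹ log (g x) dx`, with value `-∞` allowed
(the positive and negative parts are integrated separately; `log 0 = -∞`). -/
def logIntegral (g : ℝ → ℝ) : EReal :=
  ((∫⁻ x in Set.Ioc (0 : ℝ) 1, ENNReal.ofReal (Real.log (g x))) : EReal) -
    ((∫⁻ x in Set.Ioc (0 : ℝ) 1,
        if g x = 0 then (⊤ : ℝ≥0∞) else ENNReal.ofReal (-Real.log (g x))) : EReal)

/-- The Lyapunov exponent `L(β, D) = inf_{n ≥ 1} (1/n) ∫₀¹ log ‖D^{(n)}_β(x)‖ dx ∈ ℝ ∪ {-∞}`. -/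
def lyapunov (β : ℝ) (D : ℝ → Matrix (Fin 2) (Fin 2) ℂ) : EReal :=
  ⨅ n : ℕ, ((((n : ℝ) + 1)⁻¹ : ℝ) : EReal) * logIntegral fun x => ‖cocycleIter D β (n + 1) x‖

/-!
Put `w = exp(2πiz)`. Then `w • B^E(z)` is a polynomial in `w`, equal to `[[-μ, 0], [0, 0]]` at
`w = 0`. On the circle `|w| = exp(-2πε)` with `ε` large, and on the disc it bounds, these matrices
map the cone `|v₁| ≤ |v₀|`, `v₀ ≠ 0` into itself, and so do their products. For such a product the
upper left entry never vanishes and is comparable to the norm, with constants independent of the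
number of factors. This entry is holomorphic in `w`, so by the mean value property the average of
its log-modulus over the circle is the value at the centre, `n * log|μ|`. Dividing by `n` removes
the comparison constant, and the factor `w⁻¹` contributes `2πε`. Complex conjugation exchanges `ε`
and `-ε`.
-/

open scoped Matrix

attribute [local instance] Matrix.frobeniusNormedRing Matrix.frobeniusNormedAlgebra

section Cone

variable {ι 𝕜 : Type*} [NormedField 𝕜]

/-- The cone of vectors whose `i`-th coordinate is nonzero and largest in norm. -/
def coordinateCone (𝕜 : Type*) [NormedField 𝕜] (i : ι) : Set (ι → 𝕜) :=
  {v | v i ≠ 0 ∧ ∀ j, ‖v j‖ ≤ ‖v i‖}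

variable [DecidableEq ι]

lemma single_one_mem_coordinateCone (i : ι) : Pi.single i 1 ∈ coordinateCone 𝕜 i := by
  refine ⟨by simp, fun j => ?_⟩
  obtain rfl | hj := eq_or_ne j i
  · rfl
  · simp [hj]

lemma single_one_add_single_mem_coordinateCone {i j : ι} (hij : j ≠ i) {u : 𝕜} (hu : ‖u‖ ≤ 1) :
    Pi.single i 1 + Pi.single j u ∈ coordinateCone 𝕜 i := by
  refine ⟨by simp [hij.symm], fun k => ?_⟩
  obtain rfl | hki := eq_or_ne k i
  · rfl
  obtain rfl | hkj := eq_or_ne k j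
  · simpa [hij, hij.symm] using hu
  · simp [hki, hkj]

variable [Fintype ι]

/-- The submonoid of matrices mapping the cone `coordinateCone 𝕜 i` into itself. -/
def conePreserving (𝕜 : Type*) [NormedField 𝕜] (i : ι) : Submonoid (Matrix ι ι 𝕜) where
  carrier := {M | Set.MapsTo (M *ᵥ ·) (coordinateCone 𝕜 i) (coordinateCone 𝕜 i)}
  one_mem' v hv := by simpa only [Matrix.one_mulVec] using hv
  mul_mem' hM hN v hv := by simpa only [Matrix.mulVec_mulVec] using hM (hN hv)

variable {M : Matrix ι ι 𝕜} {i : ι}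

lemma apply_self_ne_zero_of_mem_conePreserving (hM : M ∈ conePreserving 𝕜 i) : M i i ≠ 0 := by
  simpa using (hM (single_one_mem_coordinateCone i)).1

lemma ne_zero_of_mem_conePreserving (hM : M ∈ conePreserving 𝕜 i) : M ≠ 0 := by
  rintro rfl
  exact apply_self_ne_zero_of_mem_conePreserving hM rfl

lemma norm_apply_le_of_mem_conePreserving_left (hM : M ∈ conePreserving 𝕜 i) (j : ι) :
    ‖M j i‖ ≤ ‖M i i‖ := by
  simpa using (hM (single_one_mem_coordinateCone i)).2 j

-- If the `j`-th entry of row `i` were larger, a vector of the cone would be sent to one whose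
-- `i`-th coordinate vanishes.
lemma norm_apply_le_of_mem_conePreserving_right (hM : M ∈ conePreserving 𝕜 i) (j : ι) :
    ‖M i j‖ ≤ ‖M i i‖ := by
  obtain rfl | hij := eq_or_ne j i
  · rfl
  by_contra! hlt
  have hj : M i j ≠ 0 := norm_pos_iff.1 ((norm_nonneg _).trans_lt hlt)
  have hu : ‖-(M i i / M i j)‖ ≤ 1 := by
    rw [norm_neg, norm_div]
    exact div_le_one_of_le₀ hlt.le (norm_nonneg _)
  refine (hM (single_one_add_single_mem_coordinateCone hij hu)).1 ?_
  simp only [Matrix.mulVec_add, Pi.add_apply, Matrix.mulVec_single, Matrix.col_apply,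
    Pi.smul_apply, MulOpposite.smul_eq_mul_unop, MulOpposite.unop_op, mul_one]
  field_simp
  ring

lemma norm_apply_le_three_mul_of_mem_conePreserving (hM : M ∈ conePreserving 𝕜 i) (j k : ι) :
    ‖M j k‖ ≤ 3 * ‖M i i‖ := by
  have hcol := norm_apply_le_of_mem_conePreserving_left hM j
  obtain rfl | hki := eq_or_ne k i
  · linarith [norm_nonneg (M k k)]
  have hsum : ‖M j i + M j k‖ ≤ ‖M i i + M i k‖ := by
    simpa [Matrix.mulVec_add] using
      (hM (single_one_add_single_mem_coordinateCone hki (norm_one (α := 𝕜)).le)).2 j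
  calc ‖M j k‖ = ‖(M j i + M j k) - M j i‖ := by rw [add_sub_cancel_left]
    _ ≤ ‖M j i + M j k‖ + ‖M j i‖ := norm_sub_le _ _
    _ ≤ (‖M i i‖ + ‖M i k‖) + ‖M i i‖ := add_le_add (hsum.trans (norm_add_le _ _)) hcol
    _ ≤ 3 * ‖M i i‖ := by linarith [norm_apply_le_of_mem_conePreserving_right hM k]

end Cone

section FrobeniusNorm

variable {m n α : Type*} [Fintype m] [Fintype n] [NormedAddCommGroup α]

lemma norm_apply_le_frobenius_norm (A : Matrix m n α) (i : m) (j : n) : ‖A i j‖ ≤ ‖A‖ := by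
  have hrow := PiLp.norm_apply_le (p := 2) (WithLp.toLp 2 (A i)) j
  exact hrow.trans (PiLp.norm_apply_le (p := 2) (WithLp.toLp 2 fun i => WithLp.toLp 2 (A i)) i)

lemma frobenius_norm_le_card_mul {ι : Type*} [Fintype ι] {A : Matrix ι ι α} {C : ℝ} (hC : 0 ≤ C)
    (h : ∀ i j, ‖A i j‖ ≤ C) : ‖A‖ ≤ Fintype.card ι * C := by
  rw [Matrix.frobenius_norm_def, ← Real.sqrt_eq_rpow]
  refine Real.sqrt_le_iff.2 ⟨by positivity, ?_⟩
  calc ∑ i, ∑ j, ‖A i j‖ ^ (2 : ℝ) ≤ ∑ _i : ι, ∑ _j : ι, C ^ (2 : ℝ) := by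
        gcongr
        exact h _ _
    _ = (Fintype.card ι * C) ^ 2 := by
        simp only [Finset.sum_const, Finset.card_univ, nsmul_eq_mul, Real.rpow_two]
        ring

lemma frobenius_norm_le_of_mem_conePreserving {ι 𝕜 : Type*} [Fintype ι] [DecidableEq ι]
    [NormedField 𝕜] {M : Matrix ι ι 𝕜} {i : ι} (hM : M ∈ conePreserving 𝕜 i) :
    ‖M‖ ≤ 3 * Fintype.card ι * ‖M i i‖ :=
  (frobenius_norm_le_card_mul (by positivity)
    (norm_apply_le_three_mul_of_mem_conePreserving hM)).trans_eq (by ring)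

end FrobeniusNorm

section CircleAverage

variable {ι : Type*} [Fintype ι] [DecidableEq ι] {i : ι} {M : ℂ → Matrix ι ι ℂ} {c : ℂ} {r : ℝ}

lemma circleIntegrable_log_norm_of_ne_zero {E : Type*} [NormedAddCommGroup E] {f : ℂ → E}
    (hf : ContinuousOn f (Metric.sphere c |r|)) (h0 : ∀ w ∈ Metric.sphere c |r|, f w ≠ 0) :
    CircleIntegrable (fun w => Real.log ‖f w‖) c r :=
  (hf.norm.log fun w hw => norm_ne_zero_iff.2 (h0 w hw)).circleIntegrable'

lemma integral_comp_circleMap_two_pi_mul {E : Type*} [NormedAddCommGroup E] [NormedSpace ℝ E]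
    (f : ℂ → E) (c : ℂ) (r : ℝ) :
    ∫ x in (0 : ℝ)..1, f (circleMap c r (2 * π * x)) = Real.circleAverage f c r := by
  rw [intervalIntegral.integral_comp_mul_left (fun θ => f (circleMap c r θ)) Real.two_pi_pos.ne',
    Real.circleAverage_def, mul_zero, mul_one]

lemma analyticOnNhd_matrix_apply {s : Set ℂ} (hM : AnalyticOnNhd ℂ M s) (j k : ι) :
    AnalyticOnNhd ℂ (fun w => M w j k) s :=
  (Matrix.entryLinearMap ℂ ℂ j k).toContinuousLinearMap.comp_analyticOnNhd hM

lemma circleAverage_log_norm_apply_self (hM : AnalyticOnNhd ℂ M (Metric.closedBall c |r|))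
    (hcone : ∀ w ∈ Metric.closedBall c |r|, M w ∈ conePreserving ℂ i) :
    Real.circleAverage (fun w => Real.log ‖M w i i‖) c r = Real.log ‖M c i i‖ :=
  AnalyticOnNhd.circleAverage_log_norm_of_ne_zero (analyticOnNhd_matrix_apply hM i i)
    fun w hw => apply_self_ne_zero_of_mem_conePreserving (hcone w hw)

lemma circleIntegrable_log_norm_of_mem_conePreserving
    (hM : AnalyticOnNhd ℂ M (Metric.closedBall c |r|))
    (hcone : ∀ w ∈ Metric.closedBall c |r|, M w ∈ conePreserving ℂ i) :
    CircleIntegrable (fun w => Real.log ‖M w‖) c r :=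
  circleIntegrable_log_norm_of_ne_zero (hM.continuousOn.mono Metric.sphere_subset_closedBall)
    fun w hw => ne_zero_of_mem_conePreserving (hcone w (Metric.sphere_subset_closedBall hw))

lemma circleIntegrable_log_norm_apply_self
    (hM : AnalyticOnNhd ℂ M (Metric.closedBall c |r|))
    (hcone : ∀ w ∈ Metric.closedBall c |r|, M w ∈ conePreserving ℂ i) :
    CircleIntegrable (fun w => Real.log ‖M w i i‖) c r :=
  circleIntegrable_log_norm_of_ne_zero
    ((analyticOnNhd_matrix_apply hM i i).continuousOn.mono Metric.sphere_subset_closedBall)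
    fun w hw => apply_self_ne_zero_of_mem_conePreserving
      (hcone w (Metric.sphere_subset_closedBall hw))

lemma log_norm_apply_self_le_circleAverage (hM : AnalyticOnNhd ℂ M (Metric.closedBall c |r|))
    (hcone : ∀ w ∈ Metric.closedBall c |r|, M w ∈ conePreserving ℂ i) :
    Real.log ‖M c i i‖ ≤ Real.circleAverage (fun w => Real.log ‖M w‖) c r := by
  have hint := circleIntegrable_log_norm_of_mem_conePreserving hM hcone
  have hint_apply := circleIntegrable_log_norm_apply_self hM hcone
  rw [← circleAverage_log_norm_apply_self hM hcone]
  refine Real.circleAverage_mono hint_apply hint fun w hw => ?_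
  have hne := apply_self_ne_zero_of_mem_conePreserving
    (hcone w (Metric.sphere_subset_closedBall hw))
  exact Real.log_le_log (norm_pos_iff.2 hne) (norm_apply_le_frobenius_norm _ i i)

lemma circleAverage_log_norm_le (hM : AnalyticOnNhd ℂ M (Metric.closedBall c |r|))
    (hcone : ∀ w ∈ Metric.closedBall c |r|, M w ∈ conePreserving ℂ i) :
    Real.circleAverage (fun w => Real.log ‖M w‖) c r ≤
      Real.log (3 * Fintype.card ι) + Real.log ‖M c i i‖ := by
  have hint := circleIntegrable_log_norm_of_mem_conePreserving hM hcone
  have hint_apply := circleIntegrable_log_norm_apply_self hM hcone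
  have : Nonempty ι := ⟨i⟩
  calc Real.circleAverage (fun w => Real.log ‖M w‖) c r
    _ ≤ Real.circleAverage (fun w => Real.log (3 * Fintype.card ι) + Real.log ‖M w i i‖)
          c r := by
        refine Real.circleAverage_mono hint ((circleIntegrable_const _ c r).add hint_apply)
          fun w hw => ?_
        have hw := hcone w (Metric.sphere_subset_closedBall hw)
        rw [← Real.log_mul (by positivity)
          (norm_ne_zero_iff.2 (apply_self_ne_zero_of_mem_conePreserving hw))]
        exact Real.log_le_log (norm_pos_iff.2 (ne_zero_of_mem_conePreserving hw))
          (frobenius_norm_le_of_mem_conePreserving hw)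
    _ = Real.log (3 * Fintype.card ι) + Real.log ‖M c i i‖ := by
        rw [Real.circleAverage_fun_add (circleIntegrable_const _ c r) hint_apply,
          Real.circleAverage_const, circleAverage_log_norm_apply_self hM hcone]

end CircleAverage

section RotationIter

variable {R : Type*}

/-- The iterates `A (ζ ^ (n - 1) * w) * ⋯ * A w` of a cocycle `A` over the rotation `w ↦ ζ * w` of
the complex plane; they extend `cocycleIter` holomorphically off the circles. -/
def rotationIter [Monoid R] (A : ℂ → R) (ζ : ℂ) : ℕ → ℂ → R
  | 0, _ => 1
  | n + 1, w => rotationIter A ζ n (ζ * w) * A w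

lemma rotationIter_zero_right [Monoid R] (A : ℂ → R) (ζ : ℂ) (n : ℕ) :
    rotationIter A ζ n 0 = A 0 ^ n := by
  induction n with
  | zero => rw [rotationIter, pow_zero]
  | succ n ih => rw [rotationIter, mul_zero, ih, pow_succ]

lemma mul_mem_closedBall_zero {ζ w : ℂ} {r : ℝ} (hζ : ‖ζ‖ ≤ 1)
    (hw : w ∈ Metric.closedBall 0 r) : ζ * w ∈ Metric.closedBall 0 r := by
  rw [mem_closedBall_zero_iff] at hw ⊢
  exact (norm_mul_le_of_le hζ hw).trans_eq (one_mul r)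

lemma rotationIter_mem [Monoid R] {S : Submonoid R} {A : ℂ → R} {ζ : ℂ} {r : ℝ} (hζ : ‖ζ‖ ≤ 1)
    (hA : ∀ w ∈ Metric.closedBall 0 r, A w ∈ S) (n : ℕ) :
    ∀ w ∈ Metric.closedBall 0 r, rotationIter A ζ n w ∈ S := by
  induction n with
  | zero => exact fun w _ => S.one_mem
  | succ n ih => exact fun w hw => S.mul_mem (ih _ (mul_mem_closedBall_zero hζ hw)) (hA w hw)

lemma analyticOnNhd_rotationIter [NormedRing R] [NormedAlgebra ℂ R] {A : ℂ → R} {ζ : ℂ} {r : ℝ}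
    (hA : AnalyticOnNhd ℂ A (Metric.closedBall 0 r)) (hζ : ‖ζ‖ ≤ 1) (n : ℕ) :
    AnalyticOnNhd ℂ (rotationIter A ζ n) (Metric.closedBall 0 r) := by
  induction n with
  | zero => exact analyticOnNhd_const
  | succ n ih =>
    exact (ih.comp (analyticOnNhd_const.mul analyticOnNhd_id)
      fun w hw => mul_mem_closedBall_zero hζ hw).mul hA

end RotationIter

lemma pow_apply_self_of_mulVec_single {ι 𝕜 : Type*} [Fintype ι] [DecidableEq ι] [CommSemiring 𝕜]
    {M : Matrix ι ι 𝕜} {i : ι} {a : 𝕜} (h : M *ᵥ Pi.single i 1 = a • Pi.single i 1) (n : ℕ) :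
    (M ^ n) i i = a ^ n := by
  have hpow : M ^ n *ᵥ Pi.single i 1 = a ^ n • Pi.single i 1 := by
    induction n with
    | zero => simp only [pow_zero, Matrix.one_mulVec, one_smul]
    | succ n ih =>
      rw [pow_succ, ← Matrix.mulVec_mulVec, h, Matrix.mulVec_smul, ih, smul_smul, pow_succ']
  simpa using congrFun hpow i

section Cocycle

lemma continuous_cocycleIter {D : ℝ → Matrix (Fin 2) (Fin 2) ℂ} (hD : Continuous D) (β : ℝ)
    (n : ℕ) : Continuous (cocycleIter D β n) := by
  induction n with
  | zero => exact continuous_const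
  | succ n ih => exact (ih.comp (continuous_add_const β)).mul hD

lemma cocycleIter_smul (c : ℝ → ℂ) (D : ℝ → Matrix (Fin 2) (Fin 2) ℂ) (β : ℝ) (n : ℕ) (x : ℝ) :
    cocycleIter (fun x => c x • D x) β n x =
      (∏ k ∈ Finset.range n, c (x + k * β)) • cocycleIter D β n x := by
  induction n generalizing x with
  | zero => simp [cocycleIter]
  | succ n ih =>
    have hshift (k : ℕ) : x + β + k * β = x + (k + 1 : ℕ) * β := by
      push_cast
      ring
    simp only [cocycleIter, ih, smul_mul_smul_comm, hshift, Finset.prod_range_succ',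
      Nat.cast_zero, zero_mul, add_zero]

lemma norm_cocycleIter_smul {c : ℝ → ℂ} {ρ : ℝ} (hc : ∀ x, ‖c x‖ = ρ)
    (D : ℝ → Matrix (Fin 2) (Fin 2) ℂ) (β : ℝ) (n : ℕ) (x : ℝ) :
    ‖cocycleIter (fun x => c x • D x) β n x‖ = ρ ^ n * ‖cocycleIter D β n x‖ := by
  rw [cocycleIter_smul, norm_smul, norm_prod]
  simp only [hc, Finset.prod_const, Finset.card_range]

lemma cocycleIter_map (f : ℂ →+* ℂ) (D : ℝ → Matrix (Fin 2) (Fin 2) ℂ) (β : ℝ) (n : ℕ) (x : ℝ) :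
    cocycleIter (fun x => (D x).map f) β n x = (cocycleIter D β n x).map f := by
  induction n generalizing x with
  | zero => simp [cocycleIter]
  | succ n ih => rw [cocycleIter, cocycleIter, ih, Matrix.map_mul]

lemma lyapunov_map_conj (β : ℝ) (D : ℝ → Matrix (Fin 2) (Fin 2) ℂ) :
    lyapunov β (fun x => (D x).map (starRingEnd ℂ)) = lyapunov β D := by
  have hnorm (n : ℕ) (x : ℝ) :
      ‖(cocycleIter D β n x).map (starRingEnd ℂ)‖ = ‖cocycleIter D β n x‖ :=
    Matrix.frobenius_norm_map_eq _ _ Complex.norm_conj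
  simp only [lyapunov, cocycleIter_map, hnorm]

lemma cocycleIter_circleMap (A : ℂ → Matrix (Fin 2) (Fin 2) ℂ) (r β : ℝ) (n : ℕ) (x : ℝ) :
    cocycleIter (fun x => A (circleMap 0 r (2 * π * x))) β n x =
      rotationIter A (circleMap 0 1 (2 * π * β)) n (circleMap 0 r (2 * π * x)) := by
  induction n generalizing x with
  | zero => rfl
  | succ n ih =>
    rw [cocycleIter, rotationIter, ih, circleMap_zero_mul, one_mul, ← mul_add, add_comm β]

lemma logIntegral_eq_coe_integral {g : ℝ → ℝ}
    (hg : IntervalIntegrable (fun x => Real.log (g x)) volume 0 1)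
    (h0 : ∀ x ∈ Set.Ioc (0 : ℝ) 1, g x ≠ 0) :
    logIntegral g = ((∫ x in (0 : ℝ)..1, Real.log (g x) : ℝ) : EReal) := by
  have hneg : ∫⁻ x in Set.Ioc (0 : ℝ) 1, (if g x = 0 then ⊤ else ENNReal.ofReal (-Real.log (g x))) =
      ∫⁻ x in Set.Ioc (0 : ℝ) 1, ENNReal.ofReal (-Real.log (g x)) :=
    setLIntegral_congr_fun measurableSet_Ioc fun x hx => if_neg (h0 x hx)
  have hneg_lt_top : ∫⁻ x in Set.Ioc (0 : ℝ) 1, ENNReal.ofReal (-Real.log (g x)) < ⊤ :=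
    hg.1.neg.lintegral_lt_top
  rw [logIntegral, hneg, intervalIntegral.integral_of_le zero_le_one,
    integral_eq_lintegral_pos_part_sub_lintegral_neg_part hg.1, EReal.coe_sub,
    EReal.coe_ennreal_toReal hg.1.lintegral_lt_top.ne,
    EReal.coe_ennreal_toReal hneg_lt_top.ne]

lemma lyapunov_eq_of_integral_bounds {β L C : ℝ} {D : ℝ → Matrix (Fin 2) (Fin 2) ℂ}
    (hD : Continuous D)
    (h0 : ∀ n x, cocycleIter D β n x ≠ 0)
    (hlower : ∀ n : ℕ, n * L ≤ ∫ x in (0 : ℝ)..1, Real.log ‖cocycleIter D β n x‖)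
    (hupper : ∀ n : ℕ, ∫ x in (0 : ℝ)..1, Real.log ‖cocycleIter D β n x‖ ≤ C + n * L) :
    lyapunov β D = (L : EReal) := by
  have hlog (n : ℕ) : logIntegral (fun x => ‖cocycleIter D β n x‖) =
      ((∫ x in (0 : ℝ)..1, Real.log ‖cocycleIter D β n x‖ : ℝ) : EReal) := by
    have hcont : Continuous fun x => Real.log ‖cocycleIter D β n x‖ :=
      (continuous_cocycleIter hD β n).norm.log fun x => norm_ne_zero_iff.2 (h0 n x)
    exact logIntegral_eq_coe_integral (hcont.intervalIntegrable 0 1)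
      fun x _ => norm_ne_zero_iff.2 (h0 n x)
  simp only [lyapunov, hlog, ← EReal.coe_mul]
  apply le_antisymm
  · have hlim : Tendsto (fun n : ℕ => C * (1 / ((n : ℝ) + 1)) + L) atTop (nhds L) := by
      simpa using (tendsto_one_div_add_atTop_nhds_zero_nat.const_mul C).add_const L
    refine ge_of_tendsto' ((continuous_coe_real_ereal.tendsto L).comp hlim) fun n => ?_
    refine (iInf_le _ n).trans (EReal.coe_le_coe_iff.2 ?_)
    rw [inv_mul_le_iff₀ (by positivity)]
    refine (hupper (n + 1)).trans_eq ?_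
    push_cast
    field_simp
  · refine le_iInf fun n => EReal.coe_le_coe_iff.2 ?_
    rw [le_inv_mul_iff₀ (by positivity)]
    exact_mod_cast hlower (n + 1)

lemma integral_log_norm_cocycleIter_smul_circleMap {A : ℂ → Matrix (Fin 2) (Fin 2) ℂ}
    {i : Fin 2} {r ρ : ℝ} {c : ℝ → ℂ} (hA : AnalyticOnNhd ℂ A (Metric.closedBall 0 |r|))
    (hcone : ∀ w ∈ Metric.closedBall 0 |r|, A w ∈ conePreserving ℂ i)
    (hρ : ρ ≠ 0) (hc : ∀ x, ‖c x‖ = ρ) (β : ℝ) (n : ℕ) :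
    ∫ x in (0 : ℝ)..1, Real.log ‖cocycleIter (fun x => c x • A (circleMap 0 r (2 * π * x))) β n x‖ =
      n * Real.log ρ +
        Real.circleAverage (fun w => Real.log ‖rotationIter A (circleMap 0 1 (2 * π * β)) n w‖)
          0 r := by
  set P := rotationIter A (circleMap 0 1 (2 * π * β)) n
  have hζ : ‖circleMap 0 1 (2 * π * β)‖ ≤ 1 := by simp
  have hP := analyticOnNhd_rotationIter hA hζ n
  have hPcone := rotationIter_mem hζ hcone n
  have hlog (x : ℝ) :
      Real.log ‖cocycleIter (fun x => c x • A (circleMap 0 r (2 * π * x))) β n x‖ =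
        n * Real.log ρ + Real.log ‖P (circleMap 0 r (2 * π * x))‖ := by
    have hne : P (circleMap 0 r (2 * π * x)) ≠ 0 := ne_zero_of_mem_conePreserving
      (hPcone _ (Metric.sphere_subset_closedBall (circleMap_mem_sphere' 0 r _)))
    rw [norm_cocycleIter_smul hc, cocycleIter_circleMap,
      Real.log_mul (pow_ne_zero n hρ) (norm_ne_zero_iff.2 hne), Real.log_pow]
  simp only [hlog]
  rw [integral_comp_circleMap_two_pi_mul fun w => n * Real.log ρ + Real.log ‖P w‖,
    Real.circleAverage_fun_add (circleIntegrable_const _ 0 r)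
      (circleIntegrable_log_norm_of_mem_conePreserving hP hPcone),
    Real.circleAverage_const]

lemma cocycleIter_smul_circleMap_ne_zero {A : ℂ → Matrix (Fin 2) (Fin 2) ℂ} {i : Fin 2} {r : ℝ}
    {c : ℝ → ℂ} (hcone : ∀ w ∈ Metric.closedBall 0 |r|, A w ∈ conePreserving ℂ i)
    (hc : ∀ x, c x ≠ 0) (β : ℝ) (n : ℕ) (x : ℝ) :
    cocycleIter (fun x => c x • A (circleMap 0 r (2 * π * x))) β n x ≠ 0 := by
  rw [cocycleIter_smul, cocycleIter_circleMap]
  have hmem := rotationIter_mem (ζ := circleMap 0 1 (2 * π * β)) (by simp) hcone n _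
    (Metric.sphere_subset_closedBall (circleMap_mem_sphere' 0 r (2 * π * x)))
  exact smul_ne_zero (Finset.prod_ne_zero_iff.2 fun k _ => hc _)
    (ne_zero_of_mem_conePreserving hmem)

theorem lyapunov_smul_circleMap {A : ℂ → Matrix (Fin 2) (Fin 2) ℂ} {i : Fin 2} {a : ℂ} {r ρ : ℝ}
    {c : ℝ → ℂ} (hA : AnalyticOnNhd ℂ A (Metric.closedBall 0 |r|))
    (hcone : ∀ w ∈ Metric.closedBall 0 |r|, A w ∈ conePreserving ℂ i)
    (ha : A 0 *ᵥ Pi.single i 1 = a • Pi.single i 1)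
    (hc : Continuous c) (hρ : ρ ≠ 0) (hcρ : ∀ x, ‖c x‖ = ρ) (β : ℝ) :
    lyapunov β (fun x => c x • A (circleMap 0 r (2 * π * x))) =
      ((Real.log ‖a‖ + Real.log ρ : ℝ) : EReal) := by
  have hζ : ‖circleMap 0 1 (2 * π * β)‖ ≤ 1 := by simp
  have hP := analyticOnNhd_rotationIter hA hζ
  have hPcone := rotationIter_mem hζ hcone
  have hcenter (n : ℕ) :
      Real.log ‖rotationIter A (circleMap 0 1 (2 * π * β)) n 0 i i‖ = n * Real.log ‖a‖ := by
    rw [rotationIter_zero_right, pow_apply_self_of_mulVec_single ha, norm_pow, Real.log_pow]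
  have hcont : Continuous fun x => A (circleMap 0 r (2 * π * x)) :=
    hA.continuousOn.comp_continuous (by fun_prop)
      fun x => Metric.sphere_subset_closedBall (circleMap_mem_sphere' 0 r _)
  have hc0 (x : ℝ) : c x ≠ 0 := norm_ne_zero_iff.1 ((hcρ x).trans_ne hρ)
  refine lyapunov_eq_of_integral_bounds (hc.smul hcont)
    (cocycleIter_smul_circleMap_ne_zero hcone hc0 β)
    (C := Real.log (3 * Fintype.card (Fin 2))) (fun n => ?_) (fun n => ?_)
  · rw [integral_log_norm_cocycleIter_smul_circleMap hA hcone hρ hcρ]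
    linarith [log_norm_apply_self_le_circleAverage (hP n) (hPcone n), hcenter n]
  · rw [integral_log_norm_cocycleIter_smul_circleMap hA hcone hρ hcρ]
    linarith [circleAverage_log_norm_le (hP n) (hPcone n), hcenter n]

end Cocycle

section AlmostMathieu

/-- The almost Mathieu transfer matrix `[[E - 2μ cos(2πz), -1], [1, 0]]` at `z = x + iε`. -/
def almostMathieu (μ E : ℂ) (ε : ℝ) : ℝ → Matrix (Fin 2) (Fin 2) ℂ := fun x =>
  !![E - 2 * μ * Complex.cos (2 * (π : ℂ) * ((x : ℂ) + (ε : ℂ) * Complex.I)), -1; 1, 0]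

/-- The almost Mathieu transfer matrix at `z`, multiplied by `w = exp(2πiz)` to cancel its pole at
`w = 0`. -/
def rescaledAlmostMathieu (μ E w : ℂ) : Matrix (Fin 2) (Fin 2) ℂ :=
  !![E * w - μ * (1 + w ^ 2), -w; w, 0]

lemma almostMathieu_neg (μ E : ℂ) (ε x : ℝ) :
    almostMathieu μ E (-ε) x =
      (almostMathieu (starRingEnd ℂ μ) (starRingEnd ℂ E) ε x).map (starRingEnd ℂ) := by
  ext i j
  fin_cases i <;> fin_cases j <;> simp [almostMathieu, ← Complex.cos_conj, Complex.conj_ofNat]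

lemma almostMathieu_eq_smul (μ E : ℂ) (ε x : ℝ) :
    almostMathieu μ E ε x = (circleMap 0 (Real.exp (-(2 * π * ε))) (2 * π * x))⁻¹ •
      rescaledAlmostMathieu μ E (circleMap 0 (Real.exp (-(2 * π * ε))) (2 * π * x)) := by
  set w := circleMap 0 (Real.exp (-(2 * π * ε))) (2 * π * x) with hw
  have hw0 : w ≠ 0 := circleMap_ne_center (Real.exp_pos _).ne'
  have hexp : w = cexp (2 * π * (x + ε * I) * I) := by
    rw [hw, circleMap_zero, ofReal_exp, ← Complex.exp_add]
    congr 1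
    push_cast
    linear_combination -2 * π * ε * I_sq
  have hcos : 2 * Complex.cos (2 * π * (x + ε * I)) = w + w⁻¹ := by
    rw [Complex.two_cos, hexp, ← Complex.exp_neg, neg_mul]
  have hentry : E - 2 * μ * Complex.cos (2 * π * (x + ε * I)) =
      w⁻¹ * (E * w - μ * (1 + w ^ 2)) := by
    rw [mul_comm 2 μ, mul_assoc, hcos]
    field_simp
    ring
  simp [almostMathieu, rescaledAlmostMathieu, hentry, hw0]

lemma analyticOnNhd_rescaledAlmostMathieu (μ E : ℂ) (s : Set ℂ) :
    AnalyticOnNhd ℂ (rescaledAlmostMathieu μ E) s := by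
  have hdiff : Differentiable ℂ (rescaledAlmostMathieu μ E) := by
    have hcoeff : rescaledAlmostMathieu μ E =
        fun w => w • !![E, -1; 1, 0] - (1 + w ^ 2) • !![μ, 0; 0, 0] := by
      ext w i j
      fin_cases i <;> fin_cases j <;> simp [rescaledAlmostMathieu, mul_comm]
    rw [hcoeff]
    fun_prop
  exact fun w _ => hdiff.analyticAt w

lemma rescaledAlmostMathieu_mem_conePreserving {μ E w : ℂ}
    (h : 2 * ‖w‖ < ‖E * w - μ * (1 + w ^ 2)‖) :
    rescaledAlmostMathieu μ E w ∈ conePreserving ℂ 0 := by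
  rintro v ⟨hv0, hv⟩
  have : 0 < ‖v 0‖ := norm_pos_iff.2 hv0
  have hfst : ‖w‖ * ‖v 0‖ < ‖(rescaledAlmostMathieu μ E w *ᵥ v) 0‖ := by
    calc ‖w‖ * ‖v 0‖ < (‖E * w - μ * (1 + w ^ 2)‖ - ‖w‖) * ‖v 0‖ := by gcongr; linarith
      _ ≤ ‖(E * w - μ * (1 + w ^ 2)) * v 0‖ - ‖w * v 1‖ := by
        rw [norm_mul, norm_mul, sub_mul]
        gcongr
        exact hv 1
      _ ≤ ‖(E * w - μ * (1 + w ^ 2)) * v 0 - w * v 1‖ := norm_sub_norm_le _ _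
      _ = ‖(rescaledAlmostMathieu μ E w *ᵥ v) 0‖ := by
        simp [rescaledAlmostMathieu, Matrix.mulVec_eq_sum, sub_eq_add_neg, mul_comm]
  have hsnd : ‖(rescaledAlmostMathieu μ E w *ᵥ v) 1‖ = ‖w‖ * ‖v 0‖ := by
    simp [rescaledAlmostMathieu, Matrix.mulVec_eq_sum, mul_comm]
  refine ⟨norm_pos_iff.1 (lt_of_le_of_lt (by positivity) hfst), Fin.forall_fin_two.2 ⟨le_rfl, ?_⟩⟩
  exact hsnd.trans_le hfst.le

lemma two_mul_norm_lt_norm_sub {μ E w : ℂ} {r : ℝ} (hwr : ‖w‖ ≤ r)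
    (hr : (‖E‖ + 2) * r < ‖μ‖ * (1 - r ^ 2)) :
    2 * ‖w‖ < ‖E * w - μ * (1 + w ^ 2)‖ := by
  have hw : (‖E‖ + 2) * ‖w‖ < ‖μ‖ * (1 - ‖w‖ ^ 2) :=
    calc (‖E‖ + 2) * ‖w‖ ≤ (‖E‖ + 2) * r := by gcongr
      _ < ‖μ‖ * (1 - r ^ 2) := hr
      _ ≤ ‖μ‖ * (1 - ‖w‖ ^ 2) := by gcongr
  have htri : ‖μ‖ ≤ ‖E * w - μ * (1 + w ^ 2)‖ + (‖E‖ * ‖w‖ + ‖μ‖ * ‖w‖ ^ 2) :=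
    calc ‖μ‖ = ‖(E * w - μ * w ^ 2) - (E * w - μ * (1 + w ^ 2))‖ := by congr 1; ring
      _ ≤ ‖E * w - μ * w ^ 2‖ + ‖E * w - μ * (1 + w ^ 2)‖ := norm_sub_le _ _
      _ ≤ (‖E * w‖ + ‖μ * w ^ 2‖) + ‖E * w - μ * (1 + w ^ 2)‖ := by
        gcongr
        exact norm_sub_le _ _
      _ = _ := by rw [norm_mul, norm_mul, norm_pow, add_comm]
  linarith

lemma rescaledAlmostMathieu_zero_mulVec_single (μ E : ℂ) :
    rescaledAlmostMathieu μ E 0 *ᵥ Pi.single 0 1 = (-μ) • Pi.single 0 1 := by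
  ext i
  fin_cases i <;> simp [rescaledAlmostMathieu]

lemma lyapunov_almostMathieu_of_lt_sinh (β : ℝ) {μ E : ℂ} {ε : ℝ}
    (h : ‖E‖ + 2 < 2 * ‖μ‖ * Real.sinh (2 * π * ε)) :
    lyapunov β (almostMathieu μ E ε) = ((Real.log ‖μ‖ + 2 * π * ε : ℝ) : EReal) := by
  set r := Real.exp (-(2 * π * ε)) with hr
  have hrpos : 0 < r := Real.exp_pos _
  have hsinh : 2 * Real.sinh (2 * π * ε) * r = 1 - r ^ 2 := by
    rw [Real.sinh_eq, ← hr, mul_div_cancel₀ _ two_ne_zero, sub_mul, ← sq, hr, ← Real.exp_add,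
      add_neg_cancel, Real.exp_zero]
  have hdom : (‖E‖ + 2) * r < ‖μ‖ * (1 - r ^ 2) := by
    rw [← hsinh, ← mul_assoc, mul_left_comm, ← mul_assoc]
    gcongr
  have hcone (w : ℂ) (hw : w ∈ Metric.closedBall 0 |r|) :
      rescaledAlmostMathieu μ E w ∈ conePreserving ℂ 0 := by
    rw [mem_closedBall_zero_iff, abs_of_pos hrpos] at hw
    exact rescaledAlmostMathieu_mem_conePreserving (two_mul_norm_lt_norm_sub hw hdom)
  have hinv : Continuous fun x : ℝ => (circleMap 0 r (2 * π * x))⁻¹ :=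
    Continuous.inv₀ (by fun_prop) fun x => circleMap_ne_center hrpos.ne'
  have hnorm (x : ℝ) : ‖(circleMap 0 r (2 * π * x))⁻¹‖ = r⁻¹ := by
    rw [norm_inv, norm_circleMap_zero, abs_of_pos hrpos]
  rw [funext (almostMathieu_eq_smul μ E ε), lyapunov_smul_circleMap
    (analyticOnNhd_rescaledAlmostMathieu μ E _) hcone (rescaledAlmostMathieu_zero_mulVec_single μ E)
    hinv (inv_ne_zero hrpos.ne') hnorm, norm_neg, Real.log_inv, hr, Real.log_exp, neg_neg]

lemma lyapunov_almostMathieu_neg (β : ℝ) (μ E : ℂ) (ε : ℝ) :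
    lyapunov β (almostMathieu μ E (-ε)) =
      lyapunov β (almostMathieu (starRingEnd ℂ μ) (starRingEnd ℂ E) ε) := by
  rw [funext (almostMathieu_neg μ E ε), lyapunov_map_conj]

lemma lyapunov_almostMathieu (β : ℝ) {μ E : ℂ} {ε : ℝ}
    (h : ‖E‖ + 2 < 2 * ‖μ‖ * Real.sinh (2 * π * |ε|)) :
    lyapunov β (almostMathieu μ E ε) = ((Real.log ‖μ‖ + 2 * π * |ε| : ℝ) : EReal) := by
  rcases le_total 0 ε with hε | hε
  · rw [abs_of_nonneg hε] at h ⊢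
    exact lyapunov_almostMathieu_of_lt_sinh β h
  · rw [abs_of_nonpos hε] at h ⊢
    rw [← neg_neg ε, lyapunov_almostMathieu_neg, neg_neg,
      lyapunov_almostMathieu_of_lt_sinh β (by simpa only [Complex.norm_conj] using h),
      Complex.norm_conj]

theorem almostMathieu_lyapunov_asymptotics_general (E : ℂ) {μ : ℂ} (hμ : μ ≠ 0) :
    ∃ ε' > (0 : ℝ), ∀ β ε : ℝ, ε' < |ε| →
      lyapunov β (almostMathieu μ E ε) = ((Real.log ‖μ‖ + 2 * π * |ε| : ℝ) : EReal) := by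
  have : 0 < ‖μ‖ := norm_pos_iff.2 hμ
  refine ⟨(‖E‖ + 2) / (2 * ‖μ‖ * (2 * π)), by positivity, fun β ε hε => lyapunov_almostMathieu β ?_⟩
  calc ‖E‖ + 2 < 2 * ‖μ‖ * (2 * π * |ε|) := by
        rwa [div_lt_iff₀' (by positivity), mul_assoc _ (2 * π)] at hε
    _ ≤ 2 * ‖μ‖ * Real.sinh (2 * π * |ε|) := by
        gcongr
        exact Real.self_le_sinh_iff.2 (by positivity)

end AlmostMathieu

/-- For irrational `β`, nonzero real coupling `μ` and real energy `E`,
the complexified Lyapunov exponent of the almost Mathieu cocycle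
`B^E(z) = [[E - 2μ cos(2πz), -1], [1, 0]]` satisfies
`L(β, B^E_ε) = log|μ| + 2π|ε|` for all `|ε| > ε'`, some `ε' > 0`. -/
theorem almostMathieu_lyapunov_asymptotics
    (β μ E : ℝ) (hβ : Irrational β) (hμ : μ ≠ 0) :
    ∃ ε' > (0:ℝ), ∀ ε : ℝ, ε' < |ε| →
      lyapunov β (fun x : ℝ =>
          !![(E : ℂ) - 2 * (μ : ℂ) * Complex.cos (2 * (π : ℂ) * ((x : ℂ) + (ε : ℂ) * Complex.I)), -1;
             1, 0]) =
        ((Real.log |μ| + 2 * π * |ε| : ℝ) : EReal) := by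
  obtain ⟨ε', hε', h⟩ := almostMathieu_lyapunov_asymptotics_general E (ofReal_ne_zero.2 hμ)
  exact ⟨ε', hε', fun ε hε => by rw [← Real.norm_eq_abs μ, ← norm_real]; exact h β ε hε⟩
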